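/- Let W be a nonempty string, a a symbol, and W' = W ++ [a]. Let k = k(W) be the active position of W, i.e., the least index k such that the suffix W[k:] occurs at least twice in W. Then for every j with 1 ≤ j < k − 1, the string W[j:] ++ [a] is a +-leaf of preLST(W'): it is a nonempty suffix of W' that occurs exactly once in W' (hence a leaf, a type-1 node, of preLST(W')), and the string W[j:] obtained from it by removing its last symbol is not a node of preLST(W'). -/

import Mathlib

/-- `U` is right-branching in `T`: there are distinct symbols `a ≠ b` with both
`U ++ [a]` and `U ++ [b]` infixes of `T`. -/
def RightBranching {σ : Type*} (T U : List σ) : Prop :=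
  ∃ a b : σ, a ≠ b ∧ (U ++ [a]) <:+: T ∧ (U ++ [b]) <:+: T

/-- `U` is a type-1 node of `LST(T)`. -/
def LType1 {σ : Type*} (T U : List σ) : Prop :=
  U <:+: T ∧ (U = [] ∨ U <:+ T ∨ RightBranching T U)

/-- `U` is a type-2 node of `LST(T)`. -/
def LType2 {σ : Type*} (T U : List σ) : Prop :=
  U <:+: T ∧ ¬ LType1 T U ∧ LType1 T U.tail

/-- `U` is a node of `LST(T)`: type-1 or type-2. -/
def LNode {σ : Type*} (T U : List σ) : Prop :=
  LType1 T U ∨ LType2 T U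

/-- `U` occurs in `T` at (0-based) position `p`. -/
def OccursAt {σ : Type*} (T U : List σ) (p : ℕ) : Prop :=
  U <+: T.drop p ∧ p + U.length ≤ T.length

/-- `U` occurs exactly once in `T`. -/
def OccursOnce {σ : Type*} (T U : List σ) : Prop :=
  ∃! p : ℕ, OccursAt T U p

/-- `U` occurs at least twice in `T`. -/
def OccursTwice {σ : Type*} (T U : List σ) : Prop :=
  ∃ p q : ℕ, p ≠ q ∧ OccursAt T U p ∧ OccursAt T U q

/-- `U` is a type-1 node of `preLST(T)`. -/
def PType1 {σ : Type*} (T U : List σ) : Prop :=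
  U <:+: T ∧ (U = [] ∨ RightBranching T U ∨ (U ≠ [] ∧ U <:+ T ∧ OccursOnce T U))

/-- `U` is a type-2 node of `preLST(T)`. -/
def PType2 {σ : Type*} (T U : List σ) : Prop :=
  U <:+: T ∧ ¬ PType1 T U ∧ PType1 T U.tail

/-- `U` is a node of `preLST(T)`: type-1 or type-2. -/
def PNode {σ : Type*} (T U : List σ) : Prop :=
  PType1 T U ∨ PType2 T U

theorem occursAt_iff {σ : Type*} {T U : List σ} {p : ℕ} :
    OccursAt T U p ↔ ∃ X Y : List σ, T = X ++ U ++ Y ∧ X.length = p := by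
  constructor
  · rintro ⟨⟨Y, hY⟩, hp⟩
    refine ⟨T.take p, Y, ?_, ?_⟩
    · rw [List.append_assoc, hY, List.take_append_drop]
    · rw [List.length_take]
      omega
  · rintro ⟨X, Y, rfl, rfl⟩
    refine ⟨?_, ?_⟩
    · rw [List.append_assoc, List.drop_left]
      exact List.prefix_append U Y
    · simp only [List.length_append]
      omega

theorem OccursAt.append_right {σ : Type*} {T U : List σ} {p : ℕ}
    (h : OccursAt T U p) (S : List σ) : OccursAt (T ++ S) U p := by
  obtain ⟨X, Y, rfl, hp⟩ := occursAt_iff.1 h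
  exact occursAt_iff.2 ⟨X, Y ++ S, by simp, hp⟩

theorem OccursAt.of_append_singleton {σ : Type*} {W U : List σ} {a c : σ} {p : ℕ}
    (h : OccursAt (W ++ [a]) (U ++ [c]) p) : OccursAt W U p := by
  obtain ⟨X, Y, hW, hp⟩ := occursAt_iff.1 h
  have hpre : X ++ U <+: W := by
    refine List.prefix_of_prefix_length_le (l₃ := W ++ [a]) ⟨[c] ++ Y, ?_⟩
      (List.prefix_append W [a]) ?_
    · rw [hW]
      simp
    · have := congrArg List.length hW
      simp only [List.length_append, List.length_singleton] at this ⊢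
      omega
  obtain ⟨Z, hZ⟩ := hpre
  exact occursAt_iff.2 ⟨X, Z, hZ.symm, hp⟩

theorem OccursAt.drop_self {σ : Type*} {W : List σ} {i : ℕ} (hi : i ≤ W.length) :
    OccursAt W (W.drop i) i :=
  ⟨List.prefix_rfl, by rw [List.length_drop]; omega⟩

theorem OccursAt.eq_of_not_occursTwice {σ : Type*} {T U : List σ} {p q : ℕ}
    (hU : ¬ OccursTwice T U) (hp : OccursAt T U p) (hq : OccursAt T U q) : p = q := by
  by_contra hpq
  exact hU ⟨p, q, hpq, hp, hq⟩

/-- A suffix of `W` that is not repeated in `W` can only be followed by `a` in `W ++ [a]`. -/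
theorem eq_of_drop_append_singleton_infix {σ : Type*} {W : List σ} {a c : σ} {i : ℕ}
    (hi : i ≤ W.length) (hU : ¬ OccursTwice W (W.drop i))
    (h : (W.drop i ++ [c]) <:+: (W ++ [a])) : c = a := by
  obtain ⟨X, Y, hXY⟩ := h
  have hX : OccursAt (W ++ [a]) (W.drop i ++ [c]) X.length :=
    occursAt_iff.2 ⟨X, Y, hXY.symm, rfl⟩
  have hXi := OccursAt.eq_of_not_occursTwice hU hX.of_append_singleton (OccursAt.drop_self hi)
  have hlen := congrArg List.length hXY
  simp only [List.length_append, List.length_drop, List.length_singleton] at hlen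
  have hY : Y = [] := List.length_eq_zero_iff.1 (by omega)
  subst hY
  rw [List.append_nil, ← List.append_assoc] at hXY
  simpa using (List.append_inj' hXY rfl).2

theorem occursOnce_append_singleton {σ : Type*} {W : List σ} (a : σ) {i : ℕ}
    (hi : i ≤ W.length) (hU : ¬ OccursTwice W (W.drop i)) :
    OccursOnce (W ++ [a]) (W.drop i ++ [a]) := by
  refine ⟨i, occursAt_iff.2 ⟨W.take i, [], by simp [← List.append_assoc], by simpa using hi⟩, ?_⟩
  intro p hp
  exact OccursAt.eq_of_not_occursTwice hU (OccursAt.of_append_singleton hp)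
    (OccursAt.drop_self hi)

/-- A nonempty suffix of `W` that is not repeated in `W` is not a type-1 node of
`preLST(W ++ [a])`. -/
theorem not_pType1_append_singleton {σ : Type*} {W : List σ} (a : σ) {i : ℕ}
    (hi : i < W.length) (hU : ¬ OccursTwice W (W.drop i)) :
    ¬ PType1 (W ++ [a]) (W.drop i) := by
  rintro ⟨-, hnil | ⟨b, c, hbc, hb, hc⟩ | ⟨-, ⟨X, hX⟩, honce⟩⟩
  · rw [List.drop_eq_nil_iff] at hnil
    omega
  · exact hbc ((eq_of_drop_append_singleton_infix hi.le hU hb).trans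
      (eq_of_drop_append_singleton_infix hi.le hU hc).symm)
  · have hXi := honce.unique (occursAt_iff.2 ⟨X, [], by simp [hX], rfl⟩)
      ((OccursAt.drop_self hi.le).append_right [a])
    have hlen := congrArg List.length hX
    simp only [List.length_append, List.length_drop, List.length_singleton] at hlen
    omega

/-- Let `k` be the active position of a nonempty string `W` and
`W' = W ++ [a]`.  For every `1 ≤ j < k - 1`, the string `W[j:] ++ [a]` is a
`+`-leaf of `preLST(W')`: it is a nonempty suffix of `W'` that occurs exactly once
in `W'`, and `W[j:]` (obtained by removing its last symbol) is not a node of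
`preLST(W')`. -/
theorem stmt_9 {σ : Type*} [DecidableEq σ] (W : List σ) (hne : W ≠ []) (a : σ)
    (k : ℕ) (hk1 : 1 ≤ k) (hk2 : k ≤ W.length + 1)
    (hkocc : OccursTwice W (W.drop (k - 1)))
    (hkmin : ∀ j : ℕ, 1 ≤ j → j < k → ¬ OccursTwice W (W.drop (j - 1))) :
    ∀ j : ℕ, 1 ≤ j → j + 1 < k →
      (W.drop (j - 1) ++ [a]) ≠ [] ∧
      (W.drop (j - 1) ++ [a]) <:+ (W ++ [a]) ∧
      OccursOnce (W ++ [a]) (W.drop (j - 1) ++ [a]) ∧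
      ¬ PNode (W ++ [a]) (W.drop (j - 1)) := by
  intro j hj hjk
  have hU := hkmin j hj (by omega)
  have hV := hkmin (j + 1) (by omega) hjk
  refine ⟨by simp, ?_, occursOnce_append_singleton a (by omega) hU, ?_⟩
  · exact ⟨W.take (j - 1), by rw [← List.append_assoc, List.take_append_drop]⟩
  · rintro (h | ⟨-, -, h⟩)
    · exact not_pType1_append_singleton a (by omega) hU h
    · rw [List.tail_drop, show j - 1 + 1 = j + 1 - 1 by omega] at h
      exact not_pType1_append_singleton a (by omega) hV h
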